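/- Let F be a number field with ring of integers O_F, and for n ≥ 1 let F^(n) be the compositum (inside a fixed algebraic closure of F) of all extensions of F of degree at most n. Let X be a proper variety over Spec(O_F) and f : X → X an O_F-morphism. Then Per(X(F^(n)), f) is finite. -/

import Mathlib

open AlgebraicGeometry CategoryTheory Limits Function NumberField

noncomputable section

set_option synthInstance.maxHeartbeats 1000000
set_option maxHeartbeats 1000000

/-- The set of `A`-valued points of `X` lying over `Spec.map φ`. -/
def Scheme.PointsOver {X : Scheme} {R : CommRingCat} (π : X ⟶ Spec R) {A : CommRingCat}
    (φ : R ⟶ A) : Type _ :=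
  { s : Spec A ⟶ X // s ≫ π = Spec.map φ }

/-- The action of an endomorphism `f : X ⟶ X` over `Spec R` on points. -/
def actPt {X : Scheme} {R A : CommRingCat} {π : X ⟶ Spec R} {φ : R ⟶ A}
    (f : X ⟶ X) (hf : f ≫ π = π) :
    Scheme.PointsOver π φ → Scheme.PointsOver π φ :=
  fun s => ⟨s.1 ≫ f, by rw [Category.assoc, hf, s.2]⟩

/-- The set of `f`-periods of points of `S`. -/
def PerSet {S : Type*} (f : S → S) : Set ℕ :=
  {n | 0 < n ∧ ∃ P : S, Function.minimalPeriod f P = n}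

/-- `F^(n)`: the compositum, inside a fixed algebraic closure `Ω` of `F`, of all extensions of
`F` of degree at most `n`. -/
def compositumOfDegreeLE (F Ω : Type*) [Field F] [Field Ω] [Algebra F Ω] (n : ℕ) :
    IntermediateField F Ω :=
  ⨆ L : {L : IntermediateField F Ω // FiniteDimensional F L ∧ Module.finrank F L ≤ n}, L.1

/-!
Let `K / F` be a Galois extension whose automorphisms have bounded order, as is the case for
`F^(n)`, with orders dividing `n!`. Fix a prime `p` and a valuation ring `V` of `K` above `p`.
By properness `X(K) = X(V)`. Every finite Galois layer of `K / F` has a Frobenius element at `V`, of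
bounded order, so the residue field `k` of `V` is finite and the finite set `X(k)` bounds the period
of the reduction of a point. A power `h` of `f` fixing this reduction induces an endomorphism of the
local ring of `X` at the closed point. It has finite order on the quotient of this local ring by the
largest stable ideal in the kernel of evaluation at the point, and an automorphism of finite order
which is trivial modulo the square of the maximal ideal has order a power of `p`. So all periods
divide numbers `C_p * p ^ s` with `C_p` depending only on `p`; comparing `p = 2` and `p = 3` bounds
them.
-/

section LocalRingEndomorphisms

open IsLocalRing
open scoped Nat

section

variable {B : Type*} [CommRing B] {I : Ideal B} {τ : B →+* B}

theorem map_sub_self_mem_pow_succ (hτ : ∀ b, τ b - b ∈ I ^ 2) (i : ℕ) {b : B} (hb : b ∈ I ^ i) :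
    τ b - b ∈ I ^ (i + 1) := by
  induction i generalizing b with
  | zero => exact Ideal.pow_le_pow_right one_le_two (hτ b)
  | succ i ih =>
    rw [pow_succ] at hb
    induction hb using Submodule.mul_induction_on' with
    | mem_mul_mem x hx y hy =>
      have hτy : τ y ∈ I := by
        simpa using add_mem (Ideal.pow_le_self two_ne_zero (hτ y)) hy
      have leibniz : τ (x * y) - x * y = (τ x - x) * τ y + x * (τ y - y) := by
        rw [map_mul]; ring
      rw [leibniz]
      refine add_mem ?_ ?_
      · rw [pow_succ]
        exact Ideal.mul_mem_mul (ih hx) hτy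
      · rw [add_assoc, pow_add]
        exact Ideal.mul_mem_mul hx (hτ y)
    | add x _ y _ hx hy =>
      rw [map_add, add_sub_add_comm]
      exact add_mem hx hy

theorem pow_apply_sub_self_mem_pow_succ (hτ : ∀ b, τ b - b ∈ I ^ 2) (i j : ℕ) {b : B}
    (hb : b ∈ I ^ i) : (τ ^ j) b - b ∈ I ^ (i + 1) := by
  induction j with
  | zero => simp
  | succ j ih =>
    have hτj : (τ ^ j) b ∈ I ^ i := by
      simpa using add_mem (Ideal.pow_le_pow_right i.le_succ ih) hb
    rw [pow_succ' τ, RingHom.mul_def, RingHom.comp_apply, ← sub_add_sub_cancel _ ((τ ^ j) b)]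
    exact add_mem (map_sub_self_mem_pow_succ hτ i hτj) ih

theorem eq_one_of_pow_eq_one_of_isUnit (hI : ⨅ i : ℕ, I ^ i = ⊥) (hτ : ∀ b, τ b - b ∈ I ^ 2)
    {u : ℕ} (hu : IsUnit (u : B)) (h : τ ^ u = 1) : τ = 1 := by
  have mem_pow (b : B) (i : ℕ) : τ b - b ∈ I ^ i := by
    induction i with
    | zero => simp
    | succ i ih =>
      -- `τ` fixes `d = τ b - b` modulo `I ^ (i + 1)`, so `0 = τ ^ u b - b` is congruent to `u d`.
      have telescope : ∑ j ∈ Finset.range u, (τ ^ j) (τ b - b) = 0 := by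
        have := Finset.sum_range_sub (fun j ↦ (τ ^ j) b) u
        simpa [h, pow_succ, map_sub] using this
      have hmul : (u : B) * (τ b - b) =
          -∑ j ∈ Finset.range u, ((τ ^ j) (τ b - b) - (τ b - b)) := by
        rw [Finset.sum_sub_distrib, telescope, Finset.sum_const, Finset.card_range, nsmul_eq_mul,
          zero_sub, neg_neg]
      rw [← Ideal.unit_mul_mem_iff_mem _ hu, hmul]
      exact neg_mem (sum_mem fun j _ ↦ pow_apply_sub_self_mem_pow_succ hτ i j ih)
  ext b
  have : τ b - b ∈ ⨅ i : ℕ, I ^ i := Ideal.mem_iInf.mpr (mem_pow b)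
  rwa [hI, Ideal.mem_bot, sub_eq_zero] at this

theorem pow_apply_sub_self_mem_of_factorial_card_dvd [Finite (B ⧸ I)] (hI : I ≤ I.comap τ)
    (hτ : IsOfFinOrder τ) {n : ℕ} (hn : (Nat.card (B ⧸ I))! ∣ n) (b : B) : (τ ^ n) b - b ∈ I := by
  have := Fintype.ofFinite (B ⧸ I)
  obtain ⟨r, hr, hτr⟩ := isOfFinOrder_iff_pow_eq_one.mp hτ
  have hsemi : Semiconj (Ideal.Quotient.mk I) τ (Ideal.quotientMap I τ hI) := fun _ ↦ rfl
  have hb : b ∈ periodicPts τ :=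
    ⟨r, hr, by rw [IsPeriodicPt, IsFixedPt, ← RingHom.coe_pow, hτr, RingHom.one_def]; rfl⟩
  rw [Nat.card_eq_fintype_card] at hn
  rw [← Ideal.Quotient.eq, RingHom.coe_pow, hsemi.iterate_right]
  exact (isPeriodicPt_factorial_card_of_mem_periodicPts
    (hsemi.mapsTo_periodicPts hb)).trans_dvd hn

theorem isLocalHom_of_isOfFinOrder (hτ : IsOfFinOrder τ) : IsLocalHom τ where
  map_nonunit a ha := by
    obtain ⟨r, hr, hτr⟩ := isOfFinOrder_iff_pow_eq_one.mp hτ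
    have := ha.map (τ ^ (r - 1))
    rwa [← RingHom.comp_apply, ← RingHom.mul_def, pow_sub_one_mul hr.ne', hτr] at this

end

theorem maximalIdeal_pow_le_comap {A B : Type*} [CommRing A] [IsLocalRing A] [CommRing B]
    [IsLocalRing B] (f : A →+* B) [IsLocalHom f] (n : ℕ) :
    maximalIdeal A ^ n ≤ (maximalIdeal B ^ n).comap f := by
  rw [← Ideal.map_le_iff_le_comap, Ideal.map_pow]
  exact Ideal.pow_right_mono (map_maximalIdeal_le f) n

theorem isUnit_natCast_of_not_dvd {B : Type*} [CommRing B] [IsLocalRing B] (p : ℕ)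
    [CharP (ResidueField B) p] {u : ℕ} (hu : ¬ p ∣ u) : IsUnit (u : B) := by
  rwa [← residue_ne_zero_iff_isUnit, map_natCast, Ne, CharP.cast_eq_zero_iff _ p]

theorem exists_pow_mul_pow_eq_one {B : Type*} [CommRing B] [IsLocalRing B] [IsNoetherianRing B]
    (p : ℕ) [CharP (ResidueField B) p] [Finite (B ⧸ maximalIdeal B ^ 2)] {σ : B →+* B}
    (hσ : IsOfFinOrder σ) {n : ℕ} (hn : (Nat.card (B ⧸ maximalIdeal B ^ 2))! ∣ n) :
    ∃ s, σ ^ (n * p ^ s) = 1 := by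
  obtain ⟨s, u, hu, hord⟩ :=
    Nat.exists_eq_pow_mul_and_not_dvd hσ.orderOf_pos.ne' p (CharP.char_ne_one (ResidueField B) p)
  have := isLocalHom_of_isOfFinOrder hσ
  refine ⟨s, eq_one_of_pow_eq_one_of_isUnit
    (Ideal.iInf_pow_eq_bot_of_isLocalRing _ (maximalIdeal.isMaximal B).ne_top)
    (pow_apply_sub_self_mem_of_factorial_card_dvd (maximalIdeal_pow_le_comap σ 2) hσ
      (hn.mul_right _))
    (isUnit_natCast_of_not_dvd p hu) ?_⟩
  rw [← pow_mul, mul_assoc, ← hord, mul_comm, pow_mul, pow_orderOf_eq_one, one_pow]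

section OrbitKernel

variable {A V : Type*} [CommRing A] [CommRing V] (g : A →+* A) (θ : A →+* V)

/-- The largest `g`-stable ideal on which `θ` vanishes: the kernel of the map recording the values
of `θ` along `g`-orbits. Modulo this ideal, `g` has finite order as soon as `θ` is periodic under
precomposition with `g`. -/
def orbitKernel : Ideal A :=
  ⨅ i : ℕ, RingHom.ker (θ.comp (g ^ i))

variable {g θ}

theorem mem_orbitKernel {a : A} : a ∈ orbitKernel g θ ↔ ∀ i : ℕ, θ ((g ^ i) a) = 0 := by
  simp [orbitKernel, RingHom.mem_ker]

theorem orbitKernel_le_comap : orbitKernel g θ ≤ (orbitKernel g θ).comap g := fun a ha ↦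
  mem_orbitKernel.mpr fun i ↦ by simpa [pow_succ] using mem_orbitKernel.mp ha (i + 1)

theorem orbitKernel_ne_top [Nontrivial V] : orbitKernel g θ ≠ ⊤ := fun h ↦ by
  have : (1 : A) ∈ orbitKernel g θ := h ▸ Submodule.mem_top
  simpa using mem_orbitKernel.mp this 0

variable (g) in
theorem iterate_comp_right (k : ℕ) : (fun η : A →+* V ↦ η.comp g)^[k] θ = θ.comp (g ^ k) := by
  induction k with
  | zero => rfl
  | succ k ih => rw [iterate_succ_apply', ih, RingHom.comp_assoc, ← RingHom.mul_def, ← pow_succ]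

theorem quotientMap_orbitKernel_pow_eq_one_iff (k : ℕ) :
    Ideal.quotientMap (orbitKernel g θ) g orbitKernel_le_comap ^ k = 1 ↔
      IsPeriodicPt (fun η : A →+* V ↦ η.comp g) k θ := by
  have hsemi : Semiconj (Ideal.Quotient.mk (orbitKernel g θ)) g
    (Ideal.quotientMap (orbitKernel g θ) g orbitKernel_le_comap) := fun _ ↦ rfl
  have hpow (a : A) : (Ideal.quotientMap (orbitKernel g θ) g orbitKernel_le_comap ^ k)
      (Ideal.Quotient.mk _ a) = Ideal.Quotient.mk _ ((g ^ k) a) := by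
    rw [RingHom.coe_pow, RingHom.coe_pow, hsemi.iterate_right]
  rw [IsPeriodicPt, IsFixedPt, iterate_comp_right]
  constructor
  · intro h
    ext a
    have := hpow a
    rw [h, RingHom.one_def, RingHom.id_apply, eq_comm, Ideal.Quotient.eq] at this
    simpa [sub_eq_zero] using mem_orbitKernel.mp this 0
  · intro h
    ext a
    rw [RingHom.comp_apply, hpow]
    refine Ideal.Quotient.eq.mpr (mem_orbitKernel.mpr fun i ↦ ?_)
    have comm : (g ^ i) ((g ^ k) a) = (g ^ k) ((g ^ i) a) :=
      RingHom.congr_fun (pow_mul_comm g i k) a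
    rw [map_sub, map_sub, comm, sub_eq_zero]
    exact RingHom.congr_fun h _

end OrbitKernel

theorem exists_isPeriodicPt_comp {A V : Type*} [CommRing A] [IsLocalRing A] [IsNoetherianRing A]
    [CommRing V] [Nontrivial V] (p : ℕ) [CharP (ResidueField A) p]
    [Finite (A ⧸ maximalIdeal A ^ 2)] {g : A →+* A} {θ : A →+* V}
    (hθ : θ ∈ periodicPts fun η : A →+* V ↦ η.comp g) :
    ∃ s, IsPeriodicPt (fun η : A →+* V ↦ η.comp g)
      ((Nat.card (A ⧸ maximalIdeal A ^ 2))! * p ^ s) θ := by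
  have := Ideal.Quotient.nontrivial_iff.mpr (orbitKernel_ne_top (g := g) (θ := θ))
  set B := A ⧸ orbitKernel g θ
  have mk_surj : Surjective (Ideal.Quotient.mk (orbitKernel g θ)) := Ideal.Quotient.mk_surjective
  have : IsLocalRing B := .of_surjective' _ mk_surj
  have : IsLocalHom (Ideal.Quotient.mk (orbitKernel g θ)) := .of_surjective _ mk_surj
  have : CharP (ResidueField B) p :=
    charP_of_injective_ringHom (ResidueField.map (Ideal.Quotient.mk (orbitKernel g θ))).injective p
  have sq_surj : Surjective (Ideal.quotientMap (maximalIdeal B ^ 2)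
      (Ideal.Quotient.mk (orbitKernel g θ)) (maximalIdeal_pow_le_comap _ 2)) :=
    Ideal.quotientMap_surjective mk_surj
  have := Finite.of_surjective _ sq_surj
  obtain ⟨r, hr, hper⟩ := hθ
  obtain ⟨s, hs⟩ := exists_pow_mul_pow_eq_one p
    (isOfFinOrder_iff_pow_eq_one.mpr ⟨r, hr, (quotientMap_orbitKernel_pow_eq_one_iff r).mpr hper⟩)
    (Nat.factorial_dvd_factorial (Nat.card_le_card_of_surjective _ sq_surj))
  exact ⟨s, (quotientMap_orbitKernel_pow_eq_one_iff _).mp hs⟩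

end LocalRingEndomorphisms

section Reduction

open IsLocalRing

variable (R : Type*) {K : Type*} [CommRing R] [Algebra.IsIntegral ℤ R] [Field K] [Algebra R K]
  (V : ValuationSubring K)

theorem algebraMap_mem_valuationSubring (y : R) : algebraMap R K y ∈ V := by
  have hy : IsIntegral V (algebraMap R K y) :=
    ((Algebra.IsIntegral.isIntegral (R := ℤ) y).map (algebraMap R K).toIntAlgHom).tower_top
  obtain ⟨z, hz⟩ := IsIntegrallyClosed.algebraMap_eq_of_integral hy
  exact hz ▸ z.2

/-- The inclusion of a ring `R` of integral elements of `K` in a valuation ring `V` of `K`. -/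
def toValuationSubring : R →+* V :=
  (algebraMap R K).codRestrict V.toSubring (algebraMap_mem_valuationSubring R V)

/-- The reduction `R → V → k_V` of a ring `R` of integral elements of `K` at a valuation ring `V`
of `K`. -/
def reductionMap : R →+* ResidueField V :=
  (residue V).comp (toValuationSubring R V)

variable {R V}

theorem reductionMap_algebraMap {R' : Type*} [CommRing R'] [Algebra.IsIntegral ℤ R'] [Algebra R' K]
    [Algebra R R'] [IsScalarTower R R' K] (y : R) :
    reductionMap R' V (algebraMap R R' y) = reductionMap R V y :=
  congrArg (residue V) (Subtype.ext (IsScalarTower.algebraMap_apply R R' K y).symm)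

theorem ker_reductionMap_ne_bot [CharZero R] {p : ℕ} (hp : p ≠ 0) [CharP (ResidueField V) p] :
    RingHom.ker (reductionMap R V) ≠ ⊥ :=
  (Submodule.ne_bot_iff _).mpr
    ⟨p, by rw [RingHom.mem_ker, map_natCast, CharP.cast_eq_zero], Nat.cast_ne_zero.mpr hp⟩

theorem exists_mul_algebraMap_eq_algebraMap [IsDedekindDomain R] {M : Type*} [Field M]
    [Algebra R M] [IsFractionRing R M] [Algebra M K] [IsScalarTower R M K]
    (hker : RingHom.ker (reductionMap R V) ≠ ⊥) {x : M} (hx : algebraMap M K x ∈ V) :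
    ∃ a b : R, reductionMap R V b ≠ 0 ∧ x * algebraMap R M b = algebraMap R M a := by
  let v : IsDedekindDomain.HeightOneSpectrum R :=
    ⟨RingHom.ker (reductionMap R V), RingHom.ker_isPrime _, hker⟩
  obtain ⟨a, ⟨b, hb⟩, hab | hba⟩ := v.exists_primeCompl_mul_eq_or_mul_eq x
  · exact ⟨a, b, hb, hab⟩
  · refine ⟨b, a, fun ha ↦ hb ?_, hba⟩
    have hmul : (⟨_, hx⟩ : V) * toValuationSubring R V a = toValuationSubring R V b := by
      apply Subtype.ext
      simpa [← IsScalarTower.algebraMap_apply, toValuationSubring] using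
        congrArg (algebraMap M K) hba
    change residue V (toValuationSubring R V b) = 0
    rw [← hmul, map_mul]
    exact mul_eq_zero_of_right _ ha

end Reduction

section Frobenius

open IsLocalRing

theorem mk_pow_smul_eq_pow_of_isArithFrobAt {R S G : Type*} [CommRing R] [CommRing S] [Algebra R S]
    [Group G] [MulSemiringAction G S] [SMulCommClass G R S] {Q : Ideal S} {σ : G}
    (hσ : IsArithFrobAt R σ Q) (N : ℕ) (y : S) :
    Ideal.Quotient.mk Q (σ ^ N • y) = Ideal.Quotient.mk Q y ^ Nat.card (R ⧸ Q.under R) ^ N := by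
  induction N with
  | zero => simp
  | succ N ih =>
    rw [pow_succ', mul_smul, pow_succ, pow_mul, ← ih]
    exact hσ.mk_apply _

variable (F : Type*) {K : Type*} [Field F] [NumberField F] [Field K] [Algebra F K]
  (V : ValuationSubring K) {p : ℕ} [CharP (ResidueField V) p] {N : ℕ}

include p in
theorem reductionMap_pow_card_pow (hp : p ≠ 0) {M : Type*} [Field M] [NumberField M] [Algebra F M]
    [IsGalois F M] [Algebra M K] [IsScalarTower F M K] (hN : ∀ σ : Gal(M/F), σ ^ N = 1) (y : 𝓞 M) :
    reductionMap (𝓞 M) V y ^ Nat.card (𝓞 F ⧸ RingHom.ker (reductionMap (𝓞 F) V)) ^ N =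
      reductionMap (𝓞 M) V y := by
  have : IsScalarTower (𝓞 F) (𝓞 M) K :=
    .of_algebraMap_eq fun y ↦ IsScalarTower.algebraMap_apply F M K y
  set P := RingHom.ker (reductionMap (𝓞 M) V)
  have hunder : P.under (𝓞 F) = RingHom.ker (reductionMap (𝓞 F) V) := by
    ext y
    rw [Ideal.mem_comap, RingHom.mem_ker, RingHom.mem_ker, reductionMap_algebraMap]
  have : P.IsPrime := RingHom.ker_isPrime _
  have : Finite (𝓞 M ⧸ P) := Ideal.finiteQuotientOfFreeOfNeBot P (ker_reductionMap_ne_bot hp)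
  obtain ⟨σ, hσ⟩ := IsArithFrobAt.exists_of_isInvariant (𝓞 F) Gal(M/F) P
  have frob := mk_pow_smul_eq_pow_of_isArithFrobAt hσ N y
  rw [hN σ, one_smul, hunder, ← map_pow, Ideal.Quotient.eq, RingHom.sub_mem_ker_iff,
    map_pow] at frob
  exact frob.symm

variable [IsGalois F K]

include p in
theorem residueField_pow_card_pow (hp : p ≠ 0) (hN : ∀ σ : Gal(K/F), σ ^ N = 1)
    (z : ResidueField V) :
    z ^ Nat.card (𝓞 F ⧸ RingHom.ker (reductionMap (𝓞 F) V)) ^ N = z := by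
  obtain ⟨⟨x, hx⟩, rfl⟩ := residue_surjective z
  have : FiniteDimensional F (IntermediateField.adjoin F {x}) :=
    IntermediateField.adjoin.finiteDimensional (Algebra.IsIntegral.isIntegral x)
  let M := IntermediateField.normalClosure F (IntermediateField.adjoin F {x}) K
  have hxM : x ∈ M :=
    IntermediateField.le_normalClosure _ (IntermediateField.mem_adjoin_simple_self F x)
  have : NumberField M := NumberField.of_module_finite F M
  have : IsGalois F M := ⟨⟩
  have hM (σ : Gal(M/F)) : σ ^ N = 1 := by
    obtain ⟨τ, rfl⟩ := AlgEquiv.restrictNormalHom_surjective K σ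
    rw [← map_pow, hN, map_one]
  obtain ⟨a, b, hb, hab⟩ := exists_mul_algebraMap_eq_algebraMap (R := 𝓞 M) (M := M)
    (ker_reductionMap_ne_bot hp) (x := ⟨x, hxM⟩) hx
  have hz : residue V ⟨x, hx⟩ = reductionMap (𝓞 M) V a / reductionMap (𝓞 M) V b := by
    rw [eq_div_iff hb]
    exact congrArg (residue V) (Subtype.ext (congrArg (algebraMap M K) hab))
  rw [hz, div_pow, reductionMap_pow_card_pow F V hp hM, reductionMap_pow_card_pow F V hp hM]

include p in
theorem finite_residueField (hp : p ≠ 0) (hG : Monoid.ExponentExists Gal(K/F)) :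
    Finite (ResidueField V) := by
  obtain ⟨N, hN, hσ⟩ := hG
  set I := RingHom.ker (reductionMap (𝓞 F) V)
  have : Finite (𝓞 F ⧸ I) := Ideal.finiteQuotientOfFreeOfNeBot I (ker_reductionMap_ne_bot hp)
  have : Nontrivial (𝓞 F ⧸ I) := Ideal.Quotient.nontrivial_iff.mpr (RingHom.ker_ne_top _)
  have hroots := Polynomial.finite_setOfPred_isRoot <|
    FiniteField.X_pow_card_sub_X_ne_zero (ResidueField V)
      (Nat.one_lt_pow hN.ne' (Finite.one_lt_card (α := 𝓞 F ⧸ I)))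
  refine Set.finite_univ_iff.mp (hroots.subset fun z _ ↦ ?_)
  simp [residueField_pow_card_pow F V hp hσ z, I, sub_eq_zero]

end Frobenius

open IsLocalRing in
theorem exists_valuationSubring_charP_residueField (K : Type*) [Field K] [CharZero K] {p : ℕ}
    (hp : p.Prime) : ∃ V : ValuationSubring K, CharP (ResidueField V) p := by
  let Z := (Int.castRingHom K).range
  have hspan : Ideal.span {(p : Z)} ≠ ⊤ := fun h ↦ by
    obtain ⟨⟨_, m, rfl⟩, hm⟩ := (Ideal.span_singleton_eq_top.mp h).exists_right_inv
    have hpm : (p : K) * m = 1 := by simpa using congrArg Subtype.val hm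
    have hunit : IsUnit (p : ℤ) := .of_mul_eq_one m (by exact_mod_cast hpm)
    exact hp.ne_one (Int.isUnit_iff_natAbs_eq.mp hunit)
  obtain ⟨V, -, hV⟩ := Ideal.image_subset_nonunits_valuationSubring _ hspan
  have hpV : ((p : V) : K) ∈ V.nonunits :=
    hV ⟨p, Ideal.subset_span rfl, by simp⟩
  have hpV' : (p : ResidueField V) = 0 := by
    rw [← map_natCast (residue V), residue_eq_zero_iff, ← V.coe_mem_nonunits_iff]
    exact hpV
  exact ⟨V, ringChar.of_eq (CharP.ringChar_of_prime_eq_zero hp hpV')⟩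

section Compositum

variable {F Ω : Type*} [Field F] [Field Ω] [Algebra F Ω] {n : ℕ}

theorem pow_factorial_apply_of_finrank_le {L : IntermediateField F Ω} [FiniteDimensional F L]
    (hL : Module.finrank F L ≤ n) (σ : Gal(Ω/F)) {x : Ω} (hx : x ∈ L) :
    (σ ^ n.factorial) x = x := by
  let postcomp : (L →ₐ[F] Ω) → (L →ₐ[F] Ω) := fun j ↦ σ.toAlgHom.comp j
  have hinj : Injective postcomp := fun _ _ h ↦
    AlgHom.ext fun y ↦ σ.injective (AlgHom.congr_fun h y)
  have hcard : Fintype.card (L →ₐ[F] Ω) ≤ n := by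
    rw [← Nat.card_eq_fintype_card]
    exact (card_algHom_le_finrank F L Ω).trans hL
  have hfix : IsPeriodicPt postcomp n.factorial L.val :=
    (isPeriodicPt_factorial_card_of_mem_periodicPts (hinj.mem_periodicPts _)).trans_dvd
      (Nat.factorial_dvd_factorial hcard)
  have hiter (k : ℕ) (y : L) : (postcomp^[k] L.val) y = (σ ^ k) y := by
    induction k with
    | zero => rfl
    | succ k ih => rw [iterate_succ_apply', pow_succ', AlgEquiv.mul_apply, ← ih]; rfl
  rw [← hiter _ ⟨x, hx⟩, hfix]
  rfl

theorem pow_factorial_apply_of_mem_compositum (σ : Gal(Ω/F)) {x : Ω}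
    (hx : x ∈ compositumOfDegreeLE F Ω n) : (σ ^ n.factorial) x = x := by
  have hle : compositumOfDegreeLE F Ω n ≤
      IntermediateField.fixedField (Subgroup.zpowers (σ ^ n.factorial)) := by
    refine iSup_le fun ⟨L, _, hLn⟩ y hy ↦ (IntermediateField.mem_fixedField_iff _ _).mpr ?_
    rintro _ ⟨k, rfl⟩
    have hfix : σ ^ n.factorial ∈ MulAction.stabilizer Gal(Ω/F) y :=
      pow_factorial_apply_of_finrank_le hLn σ hy
    exact zpow_mem hfix k
  exact (IntermediateField.mem_fixedField_iff _ _).mp (hle hx) _ (Subgroup.mem_zpowers _)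

variable (F Ω n) [Normal F Ω]

instance normal_compositumOfDegreeLE : Normal F (compositumOfDegreeLE F Ω n) := by
  refine IntermediateField.normal_iff_forall_map_le.mpr fun σ ↦ ?_
  rw [compositumOfDegreeLE, IntermediateField.map_iSup]
  refine iSup_le fun ⟨L, _, hLn⟩ ↦ ?_
  let e := (L.equivMap σ).toLinearEquiv
  exact le_iSup (fun L : {L : IntermediateField F Ω // FiniteDimensional F L ∧
    Module.finrank F L ≤ n} ↦ L.1) ⟨L.map σ, e.finiteDimensional, e.finrank_eq ▸ hLn⟩

theorem exponentExists_gal_compositumOfDegreeLE :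
    Monoid.ExponentExists Gal(compositumOfDegreeLE F Ω n/F) := by
  refine ⟨n.factorial, n.factorial_pos, fun σ ↦ ?_⟩
  obtain ⟨τ, rfl⟩ := AlgEquiv.restrictNormalHom_surjective Ω σ
  rw [← map_pow]
  ext x
  exact (AlgEquiv.restrictNormal_commutes (τ ^ n.factorial) _ x).trans
    (pow_factorial_apply_of_mem_compositum τ x.2)

end Compositum

section Periods

variable {α β : Type*} {fa : α → α} {fb : β → β} {g : α → β}

theorem isPeriodicPt_map_iff (h : Semiconj g fa fb) (hg : Injective g) {n : ℕ} {x : α} :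
    IsPeriodicPt fb n (g x) ↔ IsPeriodicPt fa n x := by
  rw [IsPeriodicPt, IsFixedPt, ← (h.iterate_right n).eq, hg.eq_iff]
  rfl

theorem perSet_subset_of_semiconj (h : Semiconj g fa fb) (hg : Bijective g) :
    PerSet fb ⊆ PerSet fa := by
  rintro _ ⟨hn, y, rfl⟩
  obtain ⟨x, rfl⟩ := hg.surjective y
  exact ⟨hn, x, minimalPeriod_eq_minimalPeriod_iff.mpr fun _ ↦
    (isPeriodicPt_map_iff h hg.injective).symm⟩

theorem finite_of_forall_dvd_mul_pow {S : Set ℕ} {p q : ℕ} (hpq : p.Coprime q)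
    (hp : ∃ C, 0 < C ∧ ∀ n ∈ S, ∃ s, n ∣ C * p ^ s)
    (hq : ∃ C, 0 < C ∧ ∀ n ∈ S, ∃ s, n ∣ C * q ^ s) : S.Finite := by
  obtain ⟨C, hC, hCS⟩ := hp
  obtain ⟨D, hD, hDS⟩ := hq
  refine (Set.finite_Iic (C * D)).subset fun n hn ↦ Nat.le_of_dvd (Nat.mul_pos hC hD) ?_
  obtain ⟨s, hs⟩ := hCS n hn
  obtain ⟨t, ht⟩ := hDS n hn
  calc
    n ∣ Nat.gcd (C * D * p ^ s) (C * D * q ^ t) :=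
      Nat.dvd_gcd (hs.trans ⟨D, by ring⟩) (ht.trans ⟨C, by ring⟩)
    _ = C * D := by rw [Nat.gcd_mul_left, hpq.pow s t, mul_one]

end Periods

universe u

section Points

variable {X : Scheme.{u}} {R A B : CommRingCat.{u}} {π : X ⟶ Spec R} {ψ : R ⟶ A}

/-- The base change map `X(A) → X(B)` along a ring homomorphism `A → B`. -/
def mapPt (g : A ⟶ B) (P : Scheme.PointsOver π ψ) : Scheme.PointsOver π (ψ ≫ g) :=
  ⟨Spec.map g ≫ P.1, by rw [Category.assoc, P.2, Spec.map_comp]⟩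

theorem semiconj_mapPt (g : A ⟶ B) {f : X ⟶ X} (hf : f ≫ π = π) :
    Semiconj (mapPt g : Scheme.PointsOver π ψ → _) (actPt f hf) (actPt f hf) :=
  fun P ↦ Subtype.ext (Category.assoc _ P.1 f).symm

theorem semiconj_val_actPt {f : X ⟶ X} (hf : f ≫ π = π) :
    Semiconj (fun P : Scheme.PointsOver π ψ ↦ P.1) (actPt f hf) (fun s ↦ s ≫ f) :=
  fun _ ↦ rfl

theorem mapPt_bijective_of_isProper [IsProper π] {V K : Type u} [CommRing V] [IsDomain V]
    [ValuationRing V] [Field K] [Algebra V K] [IsFractionRing V K] (ψ : R ⟶ .of V) :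
    Bijective (mapPt (CommRingCat.ofHom (algebraMap V K)) :
      Scheme.PointsOver π ψ → Scheme.PointsOver π (ψ ≫ CommRingCat.ofHom (algebraMap V K))) := by
  have criterion : ValuativeCriterion π := by
    have : IsProper π := inferInstance
    rw [IsProper.eq_valuativeCriterion] at this
    exact this.1.1.1
  refine (bijective_iff_existsUnique _).mpr fun P ↦ ?_
  let S : ValuativeCommSq π :=
    { R := V
      K := K
      i₁ := P.1
      i₂ := Spec.map ψ
      commSq := ⟨by rw [P.2, Spec.map_comp]⟩ }
  obtain ⟨⟨lift⟩, lift_unique⟩ := (criterion S).some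
  refine ⟨⟨lift.l, lift.fac_right⟩, Subtype.ext lift.fac_left, fun Q hQ ↦ Subtype.ext ?_⟩
  exact congrArg CommSq.LiftStruct.l
    (lift_unique ⟨Q.1, congrArg Subtype.val hQ, Q.2⟩)

end Points

section FinitePoints

instance finite_algHom_of_finiteType {R A k : Type*} [CommRing R] [CommRing A] [Algebra R A]
    [Algebra.FiniteType R A] [CommRing k] [Algebra R k] [Finite k] : Finite (A →ₐ[R] k) := by
  obtain ⟨s, hs⟩ := Algebra.FiniteType.out (R := R) (A := A)
  exact Finite.of_injective (fun (a : A →ₐ[R] k) (x : s) ↦ a x) fun a b hab ↦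
    AlgHom.ext_of_adjoin_eq_top hs fun x hx ↦ congrFun hab ⟨x, hx⟩

variable {R : CommRingCat.{u}} (k : Type u) [Finite k]

theorem finite_pointsOver_Spec [CommRing k] {A : CommRingCat.{u}} (ρ : Spec A ⟶ Spec R)
    [hρ : LocallyOfFiniteType ρ] (φ : R ⟶ .of k) : Finite (Scheme.PointsOver ρ φ) := by
  obtain ⟨χ, rfl⟩ := Spec.map_surjective ρ
  algebraize [χ.hom, φ.hom]
  have : Algebra.FiniteType R A :=
    (HasRingHomProperty.Spec_iff (P := @LocallyOfFiniteType)).mp hρ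
  refine Finite.of_surjective
    (fun a : A →ₐ[R] k ↦ (⟨Spec.map (CommRingCat.ofHom a), ?_⟩ : Scheme.PointsOver (Spec.map χ) φ))
    ?_
  · rw [← Spec.map_comp]
    exact congrArg Spec.map (CommRingCat.hom_ext a.comp_algebraMap)
  · rintro ⟨t, ht⟩
    obtain ⟨b, rfl⟩ := Spec.map_surjective t
    rw [← Spec.map_comp] at ht
    have hb := congrArg CommRingCat.Hom.hom (Spec.map_injective ht)
    exact ⟨{ b.hom with commutes' := RingHom.congr_fun hb }, rfl⟩

theorem finite_pointsOver [Field k] {X : Scheme.{u}} (π : X ⟶ Spec R) [LocallyOfFiniteType π]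
    [QuasiCompact π] (φ : R ⟶ .of k) : Finite (Scheme.PointsOver π φ) := by
  have : CompactSpace X := QuasiCompact.compactSpace_of_compactSpace π
  let 𝒰 := X.affineCover.finiteSubcover
  have hlift (s : Scheme.PointsOver π φ) : ∃ (i : 𝒰.I₀) (t : Scheme.PointsOver (𝒰.f i ≫ π) φ),
      t.1 ≫ 𝒰.f i = s.1 := by
    obtain ⟨i, z, hz⟩ := 𝒰.exists_eq (s.1 (IsLocalRing.closedPoint k))
    have hrange : Set.range s.1 ⊆ Set.range (𝒰.f i) := by
      rintro _ ⟨w, rfl⟩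
      rw [Subsingleton.elim (α := PrimeSpectrum k) w (IsLocalRing.closedPoint k)]
      exact ⟨z, hz⟩
    have fac := IsOpenImmersion.lift_fac (𝒰.f i) s.1 hrange
    exact ⟨i, ⟨IsOpenImmersion.lift (𝒰.f i) s.1 hrange, by rw [reassoc_of% fac, s.2]⟩, fac⟩
  have hfin (i : 𝒰.I₀) : Finite (Scheme.PointsOver (𝒰.f i ≫ π) φ) :=
    finite_pointsOver_Spec k _ (hρ := inferInstanceAs (LocallyOfFiniteType (𝒰.f i ≫ π))) φ
  refine Finite.of_surjective (fun t : Σ i, Scheme.PointsOver (𝒰.f i ≫ π) φ ↦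
    (⟨t.2.1 ≫ 𝒰.f t.1, by rw [Category.assoc, t.2.2]⟩ : Scheme.PointsOver π φ)) fun s ↦ ?_
  obtain ⟨i, t, ht⟩ := hlift s
  exact ⟨⟨i, t⟩, Subtype.ext ht⟩

end FinitePoints

section LocalPeriodBound

open IsLocalRing

variable {X : Scheme.{u}}

theorem iterate_comp_eq_comp_pow {Y : Scheme.{u}} (f : X ⟶ X) (m : ℕ) :
    (fun s : Y ⟶ X ↦ s ≫ f)^[m] = fun s ↦ s ≫ (End.of f ^ m).asHom :=
  smul_iterate (End.of f) m

theorem exists_SpecMap_comp_fromSpecStalk {h : X ⟶ X} {x y : X} (hx : h x = y) :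
    ∃ g : X.presheaf.stalk y ⟶ X.presheaf.stalk x,
      Spec.map g ≫ X.fromSpecStalk y = X.fromSpecStalk x ≫ h := by
  subst hx
  exact ⟨h.stalkMap x, Scheme.SpecMap_stalkMap_fromSpecStalk h⟩

section

variable {V : Type u} [CommRing V] {x : X}

/-- The `V`-valued point of `X` given by a ring homomorphism from the stalk at `x` to `V`. For local
`V` and local homomorphisms, these are the points whose closed point maps to `x`. -/
def pointOfStalk (η : X.presheaf.stalk x →+* V) : Spec (.of V) ⟶ X :=
  Spec.map (CommRingCat.ofHom η) ≫ X.fromSpecStalk x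

theorem pointOfStalk_injective :
    Injective (pointOfStalk : (X.presheaf.stalk x →+* V) → (Spec (.of V) ⟶ X)) := fun _ _ hη ↦
  congrArg CommRingCat.Hom.hom (Spec.map_injective ((cancel_mono _).mp hη))

theorem semiconj_pointOfStalk {h : X ⟶ X} {g : X.presheaf.stalk x ⟶ X.presheaf.stalk x}
    (hg : Spec.map g ≫ X.fromSpecStalk x = X.fromSpecStalk x ≫ h) :
    Semiconj pointOfStalk (fun η : X.presheaf.stalk x →+* V ↦ η.comp g.hom) (fun s ↦ s ≫ h) :=
  fun η ↦ calc
    _ = Spec.map (CommRingCat.ofHom η) ≫ Spec.map g ≫ X.fromSpecStalk x :=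
      (congrArg (· ≫ X.fromSpecStalk x) (Spec.map_comp g (CommRingCat.ofHom η))).trans
        (Category.assoc _ _ _)
    _ = pointOfStalk η ≫ h := by rw [hg, ← Category.assoc]; rfl

end

theorem SpecMap_residue_comp_apply_closedPoint {V : Type u} [CommRing V] [IsLocalRing V]
    (t : Spec (.of V) ⟶ X) :
    (Spec.map (CommRingCat.ofHom (residue V)) ≫ t) (closedPoint (ResidueField V)) =
      t (closedPoint V) :=
  (Scheme.Hom.comp_apply (Spec.map (CommRingCat.ofHom (residue V))) t _).trans
    (congrArg t (comap_closedPoint (residue V)))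

variable {V : Type u} [CommRing V] [IsLocalRing V] [Finite (ResidueField V)] (p : ℕ)
  [CharP (ResidueField V) p]

theorem exists_isPeriodicPt_of_apply_closedPoint_eq [IsLocallyNoetherian X] {h : X ⟶ X}
    {t : Spec (.of V) ⟶ X} (ht : t ∈ periodicPts fun s : Spec (.of V) ⟶ X ↦ s ≫ h)
    (hx : h (t (closedPoint V)) = t (closedPoint V)) :
    ∃ s, IsPeriodicPt (fun s : Spec (.of V) ⟶ X ↦ s ≫ h)
      ((Nat.card (X.presheaf.stalk (t (closedPoint V)) ⧸
        maximalIdeal (X.presheaf.stalk (t (closedPoint V))) ^ 2)).factorial * p ^ s) t := by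
  obtain ⟨g, hg⟩ := exists_SpecMap_comp_fromSpecStalk hx
  let θ := Scheme.stalkClosedPointTo t
  have residue_injective := (ResidueField.map θ.hom).injective
  have : CharP (ResidueField (X.presheaf.stalk (t (closedPoint V)))) p :=
    (ResidueField.map θ.hom).charP residue_injective p
  have : Finite (_ ⧸ maximalIdeal _) := Finite.of_injective _ residue_injective
  have := Ideal.finite_quotient_pow
    (IsNoetherian.noetherian (maximalIdeal (X.presheaf.stalk (t (closedPoint V))))) 2
  have hθ : pointOfStalk θ.hom = t := Scheme.Spec_stalkClosedPointTo_fromSpecStalk t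
  obtain ⟨r, hr, hper⟩ := ht
  rw [← hθ, isPeriodicPt_map_iff (semiconj_pointOfStalk hg) pointOfStalk_injective] at hper
  obtain ⟨s, hs⟩ := exists_isPeriodicPt_comp p ⟨r, hr, hper⟩
  exact ⟨s, by simpa only [hθ] using hs.map (semiconj_pointOfStalk hg)⟩

theorem exists_isPeriodicPt_of_isPeriodicPt_residue [IsLocallyNoetherian X] {f : X ⟶ X}
    {t : Spec (.of V) ⟶ X} (ht : t ∈ periodicPts fun s : Spec (.of V) ⟶ X ↦ s ≫ f) {N : ℕ}
    (hN : IsPeriodicPt (fun s ↦ s ≫ f) N (Spec.map (CommRingCat.ofHom (residue V)) ≫ t)) :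
    ∃ s, IsPeriodicPt (fun s : Spec (.of V) ⟶ X ↦ s ≫ f)
      (N * ((Nat.card (X.presheaf.stalk (t (closedPoint V)) ⧸
        maximalIdeal (X.presheaf.stalk (t (closedPoint V))) ^ 2)).factorial * p ^ s)) t := by
  let h : X ⟶ X := (End.of f ^ N).asHom
  have hiter {Y : Scheme.{u}} : (fun s : Y ⟶ X ↦ s ≫ f)^[N] = fun s ↦ s ≫ h :=
    iterate_comp_eq_comp_pow f N
  have hres : (Spec.map (CommRingCat.ofHom (residue V)) ≫ t) ≫ h =
    Spec.map (CommRingCat.ofHom (residue V)) ≫ t := (congrFun hiter _).symm.trans hN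
  have hx : h (t (closedPoint V)) = t (closedPoint V) := by
    rw [← SpecMap_residue_comp_apply_closedPoint t]
    exact (Scheme.Hom.comp_apply _ h _).symm.trans
      (congrArg (· (closedPoint (ResidueField V))) hres)
  obtain ⟨r, hr, hper⟩ := ht
  obtain ⟨s, hs⟩ := exists_isPeriodicPt_of_apply_closedPoint_eq p
    ⟨r, hr, hiter ▸ hper.iterate N⟩ hx
  exact ⟨s, by rwa [IsPeriodicPt, iterate_mul, hiter]⟩

theorem exists_forall_mem_perSet_dvd_mul_pow {R : CommRingCat.{u}} [IsNoetherianRing R]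
    {π : X ⟶ Spec R} [LocallyOfFiniteType π] [QuasiCompact π] {f : X ⟶ X} (hf : f ≫ π = π)
    (ψ : R ⟶ .of V) :
    ∃ C, 0 < C ∧ ∀ n ∈ PerSet (actPt (φ := ψ) f hf), ∃ s, n ∣ C * p ^ s := by
  have : IsLocallyNoetherian X := LocallyOfFiniteType.isLocallyNoetherian π
  let reduce := mapPt (π := π) (ψ := ψ) (CommRingCat.ofHom (residue V))
  have := finite_pointsOver (ResidueField V) π (ψ ≫ CommRingCat.ofHom (residue V))
  have := Fintype.ofFinite (Scheme.PointsOver π (ψ ≫ CommRingCat.ofHom (residue V)))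
  let N := (Fintype.card (Scheme.PointsOver π (ψ ≫ CommRingCat.ofHom (residue V)))).factorial
  let E (y : Scheme.PointsOver π (ψ ≫ CommRingCat.ofHom (residue V))) :=
    (Nat.card (X.presheaf.stalk (y.1 (closedPoint (ResidueField V))) ⧸
      maximalIdeal (X.presheaf.stalk (y.1 (closedPoint (ResidueField V)))) ^ 2)).factorial
  refine ⟨N * ∏ y, E y,
    Nat.mul_pos (Nat.factorial_pos _) (Finset.prod_pos fun _ _ ↦ Nat.factorial_pos _), ?_⟩
  rintro _ ⟨hn, P, rfl⟩
  have hP : P ∈ periodicPts (actPt f hf) := minimalPeriod_pos_iff_mem_periodicPts.mp hn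
  have hN : IsPeriodicPt (actPt f hf) N (reduce P) :=
    isPeriodicPt_factorial_card_of_mem_periodicPts ((semiconj_mapPt _ hf).mapsTo_periodicPts hP)
  obtain ⟨s, hs⟩ := exists_isPeriodicPt_of_isPeriodicPt_residue p
    ((semiconj_val_actPt hf).mapsTo_periodicPts hP) (hN.map (semiconj_val_actPt hf))
  rw [isPeriodicPt_map_iff (semiconj_val_actPt hf) Subtype.val_injective,
    ← SpecMap_residue_comp_apply_closedPoint P.1, ← mul_assoc] at hs
  exact ⟨s, hs.minimalPeriod_dvd.trans (Nat.mul_dvd_mul_right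
    (Nat.mul_dvd_mul_left N (Finset.dvd_prod_of_mem E (Finset.mem_univ (reduce P)))) _)⟩

end LocalPeriodBound

theorem stmt_13_general (F K : Type u) [Field F] [NumberField F] [Field K] [Algebra F K]
    [IsGalois F K] (hG : Monoid.ExponentExists Gal(K/F)) {X : Scheme.{u}}
    (π : X ⟶ Spec (CommRingCat.of (𝓞 F))) [IsProper π] (f : X ⟶ X) (hf : f ≫ π = π) :
    (PerSet (actPt (φ := CommRingCat.ofHom ((algebraMap F K).comp (algebraMap (𝓞 F) F)))
      f hf)).Finite := by
  have : CharZero K := charZero_of_injective_algebraMap (algebraMap F K).injective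
  have bound {p : ℕ} (hp : p.Prime) : ∃ C, 0 < C ∧ ∀ n ∈ PerSet
      (actPt (φ := CommRingCat.ofHom ((algebraMap F K).comp (algebraMap (𝓞 F) F))) f hf),
      ∃ s, n ∣ C * p ^ s := by
    obtain ⟨V, _⟩ := exists_valuationSubring_charP_residueField K hp
    have := finite_residueField F V hp.ne_zero hG
    let ψ := CommRingCat.ofHom (toValuationSubring (𝓞 F) V)
    obtain ⟨C, hC, hCn⟩ := exists_forall_mem_perSet_dvd_mul_pow p hf ψ
    exact ⟨C, hC, fun n hn ↦ hCn n (perSet_subset_of_semiconj (semiconj_mapPt _ hf)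
      (mapPt_bijective_of_isProper (K := K) ψ) hn)⟩
  exact finite_of_forall_dvd_mul_pow (by norm_num) (bound Nat.prime_two) (bound Nat.prime_three)

/-- Let `F` be a number field with ring of integers `O_F`, and `F^(n)` the
compositum inside a fixed algebraic closure of all extensions of `F` of degree at most `n`.
Let `X` be a proper variety over `Spec O_F` and `f : X ⟶ X` an `O_F`-morphism.  Then
`Per(X(F^(n)), f)` is finite. -/
theorem stmt_13 (F : Type) [Field F] [NumberField F]
    (Ω : Type) [Field Ω] [Algebra F Ω] [IsAlgClosure F Ω]
    (n : ℕ) (hn : 1 ≤ n)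
    (X : Scheme) (π : X ⟶ Spec (CommRingCat.of (𝓞 F))) [IsProper π] [IsIntegral X]
    (f : X ⟶ X) (hf : f ≫ π = π) :
    (PerSet (actPt
      (φ := CommRingCat.ofHom
        ((algebraMap F (compositumOfDegreeLE F Ω n)).comp (algebraMap (𝓞 F) F)))
      f hf)).Finite := by
  have : IsAlgClosed Ω := IsAlgClosure.isAlgClosed F
  have : Algebra.IsAlgebraic F Ω := IsAlgClosure.isAlgebraic
  have : Normal F Ω := IsAlgClosure.normal F Ω
  have : IsGalois F (compositumOfDegreeLE F Ω n) := ⟨⟩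
  exact stmt_13_general F _ (exponentExists_gal_compositumOfDegreeLE F Ω n) π f hf
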